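/- A morphism Φ of coisotropic k-modules is a regular epimorphism (i.e. a coequalizer of some pair of morphisms) if and only if Φ_T and Φ_W are surjective and Φ_W(E_0) = F_0. -/

import Mathlib

/-! Coisotropic k-modules (triples of k-modules with a structure map and a
null submodule) and their morphisms, following
Dippell–Esposito–Waldmann. -/

universe u

structure CoisoMod (k : Type u) [CommRing k] : Type (u + 1) where
  T : Type u
  W : Type u
  [addT : AddCommGroup T]
  [addW : AddCommGroup W]
  [modT : Module k T]
  [modW : Module k W]
  N : Submodule k W
  str : W →ₗ[k] T

attribute [instance] CoisoMod.addT CoisoMod.addW CoisoMod.modT CoisoMod.modW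

variable {k : Type u} [CommRing k]

/-- Morphisms of coisotropic `k`-modules. -/
structure CoisoHom (E F : CoisoMod k) : Type u where
  T : E.T →ₗ[k] F.T
  W : E.W →ₗ[k] F.W
  comm : ∀ x : E.W, T (E.str x) = F.str (W x)
  null : ∀ x ∈ E.N, W x ∈ F.N

theorem CoisoHom.ext' {E F : CoisoMod k} {f g : CoisoHom E F}
    (h1 : f.T = g.T) (h2 : f.W = g.W) : f = g := by
  cases f; cases g; cases h1; cases h2; rfl

def CoisoHom.id (E : CoisoMod k) : CoisoHom E E :=
  ⟨LinearMap.id, LinearMap.id, fun _ => rfl, fun _ h => h⟩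

def CoisoHom.comp {E F G : CoisoMod k} (g : CoisoHom F G) (f : CoisoHom E F) :
    CoisoHom E G :=
  ⟨g.T ∘ₗ f.T, g.W ∘ₗ f.W,
    fun x => by simp only [LinearMap.comp_apply, f.comm, g.comm],
    fun x hx => g.null _ (f.null _ hx)⟩

/-- `Φ` is a coequalizer of the parallel pair `(a, b)`. -/
def IsCoequalizerOf {E F G : CoisoMod k} (Φ : CoisoHom E F)
    (a b : CoisoHom G E) : Prop :=
  Φ.comp a = Φ.comp b ∧
    ∀ (H : CoisoMod k) (h : CoisoHom E H), h.comp a = h.comp b →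
      ∃! u : CoisoHom F H, u.comp Φ = h

/-- A regular epimorphism is a morphism arising as a coequalizer of some
parallel pair. -/
def IsRegularEpi {E F : CoisoMod k} (Φ : CoisoHom E F) : Prop :=
  ∃ (G : CoisoMod k) (a b : CoisoHom G E), IsCoequalizerOf Φ a b

/-!
If a coequalizer `Φ` factors as `m ∘ q` with `m` injective, then `q` equalizes the pair that `Φ`
does, so it descends along `Φ` to a section of `m`. When `m` is the inclusion of the image of `Φ`,
with `Φ_W(E_0)` rather than the trace of `F_0` as null submodule, such a section forces the image to
be all of `F`, null submodule included. Conversely, a morphism that is surjective on `T`, `W` and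
the null submodules is the cokernel of its kernel.
-/

namespace CoisoHom

variable {E F G H : CoisoMod k}

theorem cancel_left {m : CoisoHom F G} (hT : Function.Injective m.T)
    (hW : Function.Injective m.W) {f g : CoisoHom E F} : m.comp f = m.comp g ↔ f = g :=
  ⟨fun h => ext' ((LinearMap.cancel_left hT).1 (congrArg CoisoHom.T h))
    ((LinearMap.cancel_left hW).1 (congrArg CoisoHom.W h)), congrArg m.comp⟩

theorem cancel_right {q : CoisoHom E F} (hT : Function.Surjective q.T)
    (hW : Function.Surjective q.W) {f g : CoisoHom F G} : f.comp q = g.comp q ↔ f = g :=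
  ⟨fun h => ext' ((LinearMap.cancel_right hT).1 (congrArg CoisoHom.T h))
    ((LinearMap.cancel_right hW).1 (congrArg CoisoHom.W h)), congrArg (comp · q)⟩

/-- Surjectivity of a morphism on all three parts of a coisotropic module: `F_0` has to be covered
by `E_0`, not merely by `E_W`. -/
structure IsSurjective (Φ : CoisoHom E F) : Prop where
  surjective_T : Function.Surjective Φ.T
  surjective_W : Function.Surjective Φ.W
  surjOn_N : Set.SurjOn Φ.W E.N F.N

theorem isSurjective_iff {Φ : CoisoHom E F} :
    Φ.IsSurjective ↔ Function.Surjective Φ.T ∧ Function.Surjective Φ.W ∧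
      Φ.W '' (E.N : Set E.W) = (F.N : Set F.W) := by
  have mapsTo_N : Set.MapsTo Φ.W E.N F.N := Φ.null
  exact ⟨fun ⟨hT, hW, hN⟩ => ⟨hT, hW, hN.image_eq_of_mapsTo mapsTo_N⟩,
    fun ⟨hT, hW, hN⟩ => ⟨hT, hW, hN.ge⟩⟩

theorem IsSurjective.comp {Ψ : CoisoHom F G} {Φ : CoisoHom E F} (hΨ : Ψ.IsSurjective)
    (hΦ : Φ.IsSurjective) : (Ψ.comp Φ).IsSurjective where
  surjective_T := hΨ.surjective_T.comp hΦ.surjective_T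
  surjective_W := hΨ.surjective_W.comp hΦ.surjective_W
  surjOn_N := hΨ.surjOn_N.comp hΦ.surjOn_N

theorem isSurjective_of_comp_eq_id {f : CoisoHom E F} {u : CoisoHom F E}
    (hu : f.comp u = CoisoHom.id F) : f.IsSurjective where
  surjective_T y := ⟨u.T y, LinearMap.congr_fun (congrArg CoisoHom.T hu) y⟩
  surjective_W y := ⟨u.W y, LinearMap.congr_fun (congrArg CoisoHom.W hu) y⟩
  surjOn_N y hy := ⟨u.W y, u.null y hy, LinearMap.congr_fun (congrArg CoisoHom.W hu) y⟩

section Image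

/-- The image of `Φ : E → F`. Its null submodule is the image of the null submodule of `E`, in
general smaller than the trace of that of `F`, so that `Φ.toImage` is surjective on all parts. -/
def image (Φ : CoisoHom E F) : CoisoMod k where
  T := LinearMap.range Φ.T
  W := LinearMap.range Φ.W
  N := E.N.map Φ.W.rangeRestrict
  str := F.str.restrict (by rintro _ ⟨x, rfl⟩; exact ⟨E.str x, Φ.comm x⟩)

/-- The corestriction of a morphism to its image. -/
def toImage (Φ : CoisoHom E F) : CoisoHom E Φ.image where
  T := Φ.T.rangeRestrict
  W := Φ.W.rangeRestrict
  comm x := Subtype.ext (Φ.comm x)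
  null x hx := ⟨x, hx, rfl⟩

/-- The inclusion of the image of a morphism into its codomain. -/
def imageIncl (Φ : CoisoHom E F) : CoisoHom Φ.image F where
  T := (LinearMap.range Φ.T).subtype
  W := (LinearMap.range Φ.W).subtype
  comm _ := rfl
  null := by
    rintro _ ⟨x, hx, rfl⟩
    exact Φ.null x hx

theorem imageIncl_comp_toImage (Φ : CoisoHom E F) : Φ.imageIncl.comp Φ.toImage = Φ :=
  rfl

theorem isSurjective_toImage (Φ : CoisoHom E F) : Φ.toImage.IsSurjective where
  surjective_T := Φ.T.surjective_rangeRestrict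
  surjective_W := Φ.W.surjective_rangeRestrict
  surjOn_N _ hy := hy

end Image

section Kernel

/-- The zero morphism; the coequalizer of a morphism and `0` is its cokernel. -/
instance : Zero (CoisoHom E F) :=
  ⟨⟨0, 0, fun _ => (map_zero F.str).symm, fun _ _ => F.N.zero_mem⟩⟩

/-- The categorical kernel of a morphism; its null submodule is the trace of that of the
domain. -/
def ker (Φ : CoisoHom E F) : CoisoMod k where
  T := LinearMap.ker Φ.T
  W := LinearMap.ker Φ.W
  N := E.N.submoduleOf (LinearMap.ker Φ.W)
  str := E.str.restrict fun x (hx : Φ.W x = 0) =>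
    show Φ.T (E.str x) = 0 by rw [Φ.comm, hx, map_zero]

/-- The inclusion of the kernel of a morphism into its domain. -/
def kerIncl (Φ : CoisoHom E F) : CoisoHom Φ.ker E where
  T := (LinearMap.ker Φ.T).subtype
  W := (LinearMap.ker Φ.W).subtype
  comm _ := rfl
  null _ hx := hx

theorem comp_zero (f : CoisoHom F G) : f.comp (0 : CoisoHom E F) = 0 :=
  ext' f.T.comp_zero f.W.comp_zero

theorem comp_kerIncl (Φ : CoisoHom E F) : Φ.comp Φ.kerIncl = 0 :=
  ext' Φ.T.comp_ker_subtype Φ.W.comp_ker_subtype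

theorem IsSurjective.existsUnique_comp_eq {Φ : CoisoHom E F} (hΦ : Φ.IsSurjective)
    {h : CoisoHom E H} (h_ker : h.comp Φ.kerIncl = 0) : ∃! u : CoisoHom F H, u.comp Φ = h := by
  obtain ⟨uT, huT : uT ∘ₗ Φ.T = h.T⟩ := (LinearMap.exact_lcomp_of_exact_of_surjective H.T
    Φ.T.exact_subtype_ker_map hΦ.surjective_T h.T).1 (congrArg CoisoHom.T h_ker)
  obtain ⟨uW, huW : uW ∘ₗ Φ.W = h.W⟩ := (LinearMap.exact_lcomp_of_exact_of_surjective H.W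
    Φ.W.exact_subtype_ker_map hΦ.surjective_W h.W).1 (congrArg CoisoHom.W h_ker)
  have uT_apply (x : E.T) : uT (Φ.T x) = h.T x := LinearMap.congr_fun huT x
  have uW_apply (x : E.W) : uW (Φ.W x) = h.W x := LinearMap.congr_fun huW x
  have comm (y : F.W) : uT (F.str y) = H.str (uW y) := by
    obtain ⟨x, rfl⟩ := hΦ.surjective_W y
    rw [← Φ.comm, uT_apply, uW_apply, h.comm]
  have null (y : F.W) (hy : y ∈ F.N) : uW y ∈ H.N := by
    obtain ⟨x, hx, rfl⟩ := hΦ.surjOn_N hy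
    exact uW_apply x ▸ h.null x hx
  let u : CoisoHom F H := ⟨uT, uW, comm, null⟩
  have hu : u.comp Φ = h := ext' huT huW
  exact ⟨u, hu, fun v hv =>
    (cancel_right hΦ.surjective_T hΦ.surjective_W).1 (hv.trans hu.symm)⟩

theorem IsSurjective.isCoequalizerOf_kerIncl_zero {Φ : CoisoHom E F} (hΦ : Φ.IsSurjective) :
    IsCoequalizerOf Φ Φ.kerIncl 0 :=
  ⟨Φ.comp_kerIncl.trans Φ.comp_zero.symm,
    fun _ h hh => hΦ.existsUnique_comp_eq (hh.trans h.comp_zero)⟩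

end Kernel

end CoisoHom

section RegularEpi

variable {E F I : CoisoMod k}

theorem IsRegularEpi.exists_comp_eq_id_of_injective {q : CoisoHom E I} {m : CoisoHom I F}
    (hmq : IsRegularEpi (m.comp q)) (hT : Function.Injective m.T) (hW : Function.Injective m.W) :
    ∃ u : CoisoHom F I, m.comp u = CoisoHom.id F := by
  obtain ⟨G, a, b, hab, desc⟩ := hmq
  have hq : q.comp a = q.comp b := (CoisoHom.cancel_left hT hW).1 hab
  obtain ⟨u, hu, -⟩ := desc I q hq
  have hmu : (m.comp u).comp (m.comp q) = m.comp q := congrArg m.comp hu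
  exact ⟨u, (desc F (m.comp q) hab).unique hmu rfl⟩

theorem IsRegularEpi.isSurjective {Φ : CoisoHom E F} (hΦ : IsRegularEpi Φ) :
    Φ.IsSurjective := by
  rw [← Φ.imageIncl_comp_toImage] at hΦ ⊢
  obtain ⟨u, hu⟩ := hΦ.exists_comp_eq_id_of_injective Subtype.val_injective Subtype.val_injective
  exact (CoisoHom.isSurjective_of_comp_eq_id hu).comp Φ.isSurjective_toImage

theorem isRegularEpi_iff_isSurjective {Φ : CoisoHom E F} :
    IsRegularEpi Φ ↔ Φ.IsSurjective :=
  ⟨IsRegularEpi.isSurjective, fun hΦ => ⟨_, _, _, hΦ.isCoequalizerOf_kerIncl_zero⟩⟩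

end RegularEpi

/-- a morphism of coisotropic `k`-modules is a regular
epimorphism iff both components are surjective and the Wobs-component maps
the null submodule onto the null submodule. -/
theorem coisoHom_regularEpi_iff {E F : CoisoMod k} (Φ : CoisoHom E F) :
    IsRegularEpi Φ ↔
      Function.Surjective Φ.T ∧ Function.Surjective Φ.W ∧
        Φ.W '' (E.N : Set E.W) = (F.N : Set F.W) :=
  isRegularEpi_iff_isSurjective.trans CoisoHom.isSurjective_iff
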